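/- For every natural number n ≥ 6: (a) every finite simple graph having the same (⌊n/2⌋+1)-deck as the path P_n is isomorphic to P_n; and (b) there exists a finite simple graph not isomorphic to P_n having the same ⌊n/2⌋-deck as P_n. Hence ρ(P_n) = ⌊n/2⌋ + 1. -/

import Mathlib

open SimpleGraph

/-- `SameDeck G G' k`: `G` and `G'` have the same `k`-deck, i.e. for every simple graph `H`
on `k` vertices, the number of `k`-element vertex subsets of `G` inducing a subgraph
isomorphic to `H` equals the corresponding number for `G'`. -/
def SameDeck {V W : Type*} [Fintype V] [Fintype W]
    (G : SimpleGraph V) (G' : SimpleGraph W) (k : ℕ) : Prop :=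
  ∀ H : SimpleGraph (Fin k),
    Set.ncard {s : Finset V | s.card = k ∧ Nonempty ((G.induce (↑s : Set V)) ≃g H)} =
    Set.ncard {s : Finset W | s.card = k ∧ Nonempty ((G'.induce (↑s : Set W)) ≃g H)}

/-- `copies G H = s(G,H)`, the number of vertex subsets of `G` whose induced subgraph is
isomorphic to `H`. -/
noncomputable def copies {V W : Type*} [Fintype V]
    (G : SimpleGraph V) (H : SimpleGraph W) : ℕ :=
  Set.ncard {s : Finset V | Nonempty ((G.induce (↑s : Set V)) ≃g H)}

/-- The connected component `c` of `G` is a path on `m` vertices. -/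
def CompIsPath {V : Type*} (G : SimpleGraph V) (c : G.ConnectedComponent) (m : ℕ) : Prop :=
  Nonempty ((G.induce c.supp) ≃g pathGraph m)

/-- The connected component `c` of `G` is a cycle on `m` vertices (`m ≥ 3`). -/
def CompIsCycle {V : Type*} (G : SimpleGraph V) (c : G.ConnectedComponent) (m : ℕ) : Prop :=
  3 ≤ m ∧ Nonempty ((G.induce c.supp) ≃g cycleGraph m)

/-- A linear forest: every connected component is a path. -/
def IsLinearForest {V : Type*} (G : SimpleGraph V) : Prop :=
  ∀ c : G.ConnectedComponent, ∃ m : ℕ, CompIsPath G c m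


/-!
A graph `G` with the same `k`-deck as the path `P_n`, where `4 ≤ k` and `n < 2 * k`, has `n`
vertices and maximum degree at most two. Let `P_m` be a longest induced path of `G`. An outside
vertex adjacent to it would extend it to `P_{m+1}` or close it to a cycle `C_{m+1}`, but a cycle
contains too many copies of `P_k`; so `P_m` spans a component of `G`. As fewer than `k` vertices lie
outside that component, it contains all `n + 1 - k` induced copies of `P_k`, which forces `m = n`.

For the converse, `P_a ⊔ C_b` and `P_{a+b}` are obtained from each other by exchanging two tails
leaving the same vertex. A set of at most `a + 1` vertices misses some level along the tails, and
exchanging the tails only below the first missed level turns the subgraph it induces in one graph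
into a subgraph of the other.
-/

section Copies

variable {V V' W : Type*} {G : SimpleGraph V} {G' : SimpleGraph V'} {H : SimpleGraph W}

lemma card_eq_of_induce_iso [Fintype W] {s : Finset V} (e : G.induce (s : Set V) ≃g H) :
    s.card = Fintype.card W := by
  simpa using Fintype.card_congr e.toEquiv

lemma nonempty_induce_iso_induce_map (f : G ↪g G') (s : Finset V) :
    Nonempty (G.induce (s : Set V) ≃g G'.induce (s.map f.toEmbedding : Set V')) := by
  have hrange : (s.map f.toEmbedding : Set V') = Set.range (f.comp (.induce (s : Set V))) := by
    ext; simp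
  exact hrange ▸ ⟨(f.comp (.induce (s : Set V))).isoInduceRange⟩

lemma nonempty_induce_map_univ_iso [Fintype W] (f : H ↪g G) :
    Nonempty (G.induce (Finset.univ.map f.toEmbedding : Set V) ≃g H) := by
  have hrange : (Finset.univ.map f.toEmbedding : Set V) = Set.range f := by simp
  exact hrange ▸ ⟨f.isoInduceRange.symm⟩

lemma copies_pos_iff [Fintype V] : 0 < copies G H ↔ H ⊴ G := by
  rw [copies, Set.ncard_pos, isIndContained_iff_exists_iso_induce]
  constructor
  · rintro ⟨s, ⟨e⟩⟩
    exact ⟨s, ⟨e.symm⟩⟩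
  · rintro ⟨s, ⟨e⟩⟩
    lift s to Finset V using s.toFinite
    exact ⟨s, ⟨e.symm⟩⟩

lemma copies_mono [Fintype V] [Fintype V'] (f : G ↪g G') : copies G H ≤ copies G' H := by
  refine Set.ncard_le_ncard_of_injOn (·.map f.toEmbedding) ?_ (Finset.map_injective _).injOn
  rintro s ⟨e⟩
  obtain ⟨e'⟩ := nonempty_induce_iso_induce_map f s
  exact ⟨e'.symm.trans e⟩

lemma mem_of_reachable {A : Set V} (hA : ∀ x ∈ A, ∀ y, G.Adj x y → y ∈ A) {x y : V}
    (hxy : G.Reachable x y) (hx : x ∈ A) : y ∈ A := by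
  obtain ⟨p⟩ := hxy
  induction p with
  | nil => exact hx
  | cons hadj _ ih => exact ih (hA _ hx _ hadj)

lemma subset_of_preconnected_induce {s A : Set V} (hs : (G.induce s).Preconnected)
    (hA : ∀ x ∈ s, x ∈ A → ∀ y ∈ s, G.Adj x y → y ∈ A) (hsA : (s ∩ A).Nonempty) : s ⊆ A := by
  obtain ⟨x, hxs, hxA⟩ := hsA
  intro y hys
  exact mem_of_reachable (G := G.induce s) (A := Subtype.val ⁻¹' A)
    (fun u hu v huv => hA u u.2 hu v v.2 huv) (hs ⟨x, hxs⟩ ⟨y, hys⟩) hxA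

lemma copies_le_copies_of_range_closed [Fintype V] [Fintype V'] [Fintype W]
    (hH : H.Preconnected) (f : G ↪g G')
    (hclosed : ∀ v w, G'.Adj (f v) w → w ∈ Set.range f)
    (hcard : Fintype.card V' < Fintype.card V + Fintype.card W) : copies G' H ≤ copies G H := by
  classical
  refine (Set.ncard_le_ncard (t := (·.map f.toEmbedding) '' _) ?_).trans Set.ncard_image_le
  rintro s ⟨e⟩
  have hmeet : (s ∩ Finset.univ.map f.toEmbedding).Nonempty :=
    Finset.inter_nonempty_of_card_lt_card_add_card s.subset_univ (Finset.subset_univ _) <| by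
      simpa [card_eq_of_induce_iso e, add_comm] using hcard
  have hsub : s ⊆ Finset.univ.map f.toEmbedding := by
    refine Finset.coe_subset.1 <| subset_of_preconnected_induce (e.preconnected_iff.2 hH) ?_
      (mod_cast hmeet)
    rintro x - hx w - hadj
    obtain ⟨v, -, rfl⟩ := Finset.mem_map.1 hx
    simpa using hclosed v w hadj
  obtain ⟨t, -, rfl⟩ := Finset.subset_map_iff.1 hsub
  obtain ⟨e'⟩ := nonempty_induce_iso_induce_map f t
  exact ⟨t, ⟨e'.trans e⟩, rfl⟩

end Copies

section Decks

variable {V W : Type*} {G : SimpleGraph V} {G' : SimpleGraph W} {k : ℕ}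

lemma setOf_card_and_induce_iso (G : SimpleGraph V) (H : SimpleGraph (Fin k)) :
    {s : Finset V | s.card = k ∧ Nonempty (G.induce (s : Set V) ≃g H)} =
      {s : Finset V | Nonempty (G.induce (s : Set V) ≃g H)} := by
  ext s
  simp only [Set.mem_ofPred_eq, and_iff_right_iff_imp]
  rintro ⟨e⟩
  simpa using card_eq_of_induce_iso e

lemma sameDeck_iff_copies [Fintype V] [Fintype W] :
    SameDeck G G' k ↔ ∀ H : SimpleGraph (Fin k), copies G H = copies G' H := by
  simp only [SameDeck, copies, setOf_card_and_induce_iso]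

/-- The isomorphism relation on the simple graphs with vertex type `V`. -/
def isoSetoid (V : Type*) : Setoid (SimpleGraph V) where
  r H H' := Nonempty (H ≃g H')
  iseqv := ⟨fun _ => ⟨.refl⟩, fun ⟨e⟩ => ⟨e.symm⟩, fun ⟨e⟩ ⟨e'⟩ => ⟨e.trans e'⟩⟩

/-- The card of `G` at a `k`-element vertex set `s`: the isomorphism class of the subgraph of `G`
induced by `s`, represented on the vertex set `Fin k` so that cards of different graphs can be
compared. -/
noncomputable def deckCard (G : SimpleGraph V) (s : {s : Finset V // s.card = k}) :
    Quotient (isoSetoid (Fin k)) :=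
  Quotient.mk _ ((G.induce (s.1 : Set V)).overFin (by simp [s.2]))

lemma deckCard_eq_mk_iff {s : {s : Finset V // s.card = k}} {H : SimpleGraph (Fin k)} :
    deckCard G s = Quotient.mk _ H ↔ Nonempty (G.induce (s.1 : Set V) ≃g H) := by
  rw [deckCard, Quotient.eq]
  let e := (G.induce (s.1 : Set V)).overFinIso (n := k) (by simp [s.2])
  exact ⟨fun ⟨e'⟩ => ⟨e.trans e'⟩, fun ⟨e'⟩ => ⟨e.symm.trans e'⟩⟩

lemma card_deckCard_fiber [Fintype V] (G : SimpleGraph V) (H : SimpleGraph (Fin k)) :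
    Nat.card {s : {s : Finset V // s.card = k} // deckCard G s = Quotient.mk _ H} = copies G H := by
  simp only [copies, deckCard_eq_mk_iff, ← setOf_card_and_induce_iso]
  exact Nat.card_congr <| Equiv.subtypeSubtypeEquivSubtypeInter
    (fun s : Finset V => s.card = k) (fun s => Nonempty (G.induce (s : Set V) ≃g H))

lemma deckCard_eq_deckCard_iff {s : {s : Finset V // s.card = k}}
    {t : {t : Finset W // t.card = k}} :
    deckCard G s = deckCard G' t ↔
      Nonempty (G.induce (s.1 : Set V) ≃g G'.induce (t.1 : Set W)) := by
  let e := (G'.induce (t.1 : Set W)).overFinIso (n := k) (by simp [t.2])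
  exact deckCard_eq_mk_iff.trans ⟨fun ⟨e'⟩ => ⟨e'.trans e.symm⟩, fun ⟨e'⟩ => ⟨e'.trans e⟩⟩

lemma sameDeck_iff_exists_equiv [Fintype V] [Fintype W] : SameDeck G G' k ↔
    ∃ Φ : {s : Finset V // s.card = k} ≃ {t : Finset W // t.card = k},
      ∀ s, Nonempty (G.induce (s.1 : Set V) ≃g G'.induce ((Φ s).1 : Set W)) := by
  simp only [sameDeck_iff_copies, ← card_deckCard_fiber, ← deckCard_eq_deckCard_iff]
  constructor
  · intro h
    have hfiber (q : Quotient (isoSetoid (Fin k))) :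
        Nonempty ({s // deckCard G s = q} ≃ {t // deckCard G' t = q}) := by
      induction q using Quotient.inductionOn with | h H => exact Finite.card_eq.1 (h H)
    exact ⟨.ofFiberEquiv fun q => (hfiber q).some, fun s => (Equiv.ofFiberEquiv_map _ s).symm⟩
  · rintro ⟨Φ, hΦ⟩ H
    exact Nat.card_congr (Φ.subtypeEquiv fun s => by rw [hΦ])

namespace SameDeck

variable [Fintype V] [Fintype W]

lemma choose_card_eq (h : SameDeck G G' k) :
    (Fintype.card V).choose k = (Fintype.card W).choose k := by
  obtain ⟨Φ, -⟩ := sameDeck_iff_exists_equiv.1 h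
  simpa using Fintype.card_congr Φ

lemma card_le_card (h : SameDeck G G' k) (hk : k ≠ 0) (hkW : k ≤ Fintype.card W) :
    Fintype.card V ≤ Fintype.card W := by
  by_contra! hlt
  obtain ⟨j, rfl⟩ := Nat.exists_eq_succ_of_ne_zero hk
  refine h.choose_card_eq.not_gt ?_
  calc (Fintype.card W).choose (j + 1)
    _ < (Fintype.card W).choose j + (Fintype.card W).choose (j + 1) :=
      Nat.lt_add_of_pos_left (Nat.choose_pos (by omega))
    _ = (Fintype.card W + 1).choose (j + 1) := (Nat.choose_succ_succ' _ _).symm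
    _ ≤ (Fintype.card V).choose (j + 1) := Nat.choose_le_choose _ hlt

lemma card_eq_card (h : SameDeck G G' k) (hk : k ≠ 0) (hkW : k ≤ Fintype.card W) :
    Fintype.card V = Fintype.card W := by
  have hkV : k ≤ Fintype.card V := by
    by_contra! hlt
    exact (Nat.choose_pos hkW).ne' (h.choose_card_eq ▸ Nat.choose_eq_zero_of_lt hlt)
  exact (h.card_le_card hk hkW).antisymm (card_le_card (fun H => (h H).symm) hk hkV)

lemma induce_isIndContained (h : SameDeck G G' k) (hk : k ≤ Fintype.card V) {s : Finset V}
    (hs : s.card ≤ k) : G.induce (s : Set V) ⊴ G' := by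
  obtain ⟨Φ, hΦ⟩ := sameDeck_iff_exists_equiv.1 h
  obtain ⟨t, hst, ht⟩ := Finset.exists_superset_card_eq hs hk
  obtain ⟨e⟩ := hΦ ⟨t, ht⟩
  exact ⟨(Embedding.induce _).comp (e.toEmbedding.comp (induceHomOfLE G hst))⟩

end SameDeck

end Decks

section PathCounts

/-- The window of the `k` consecutive vertices `a, a + 1, …, a + k - 1` of the path on `m` vertices,
truncated at the end of the path. -/
def pathWindow (m k a : ℕ) : Finset (Fin m) := {x | a ≤ (x : ℕ) ∧ (x : ℕ) < a + k}

@[simp]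
lemma mem_pathWindow {m k a : ℕ} {x : Fin m} :
    x ∈ pathWindow m k a ↔ a ≤ (x : ℕ) ∧ (x : ℕ) < a + k := by
  simp [pathWindow]

lemma nonempty_induce_pathWindow_iso {k m a : ℕ} (h : a + k ≤ m) :
    Nonempty ((pathGraph m).induce (pathWindow m k a : Set (Fin m)) ≃g pathGraph k) := by
  let shift : pathGraph k ↪g pathGraph m :=
    { toFun := fun t => ⟨a + t, by omega⟩
      inj' := fun s t hst => by simpa [Fin.ext_iff] using hst
      map_rel_iff' := by
        intro s t
        change (pathGraph m).Adj ⟨a + s, _⟩ ⟨a + t, _⟩ ↔ _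
        simp only [pathGraph_adj]
        omega }
  have hwindow : pathWindow m k a = Finset.univ.map shift.toEmbedding := by
    ext x
    simp only [mem_pathWindow, Finset.mem_map, Finset.mem_univ, true_and]
    constructor
    · rintro ⟨hax, hxa⟩
      exact ⟨⟨x - a, by omega⟩, Fin.ext (Nat.add_sub_of_le hax)⟩
    · rintro ⟨t, rfl⟩
      exact ⟨Nat.le_add_right a t, Nat.add_lt_add_left t.2 a⟩
  exact hwindow ▸ nonempty_induce_map_univ_iso shift

lemma pathWindow_injOn {k m : ℕ} (hk : 0 < k) :
    Set.InjOn (pathWindow m k) (Set.Iio (m + 1 - k)) := by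
  intro a ha b hb hab
  simp only [Set.mem_Iio] at ha hb
  have h₁ : (⟨a, by omega⟩ : Fin m) ∈ pathWindow m k b := hab ▸ by simp [hk]
  have h₂ : (⟨b, by omega⟩ : Fin m) ∈ pathWindow m k a := hab ▸ by simp [hk]
  simp only [mem_pathWindow] at h₁ h₂
  omega

lemma ordConnected_of_preconnected_induce_pathGraph {m : ℕ} {s : Set (Fin m)}
    (hs : ((pathGraph m).induce s).Preconnected) : s.OrdConnected := by
  refine Set.ordConnected_iff.2 fun x hx z hz _ y ⟨hxy, hyz⟩ => by_contra fun hy => ?_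
  have hlt : s ⊆ Set.Iio y := by
    refine subset_of_preconnected_induce hs ?_ ⟨x, hx, hxy.lt_of_ne fun h => hy (h ▸ hx)⟩
    intro u _ huy v hv huv
    have hvy : v ≠ y := fun h => hy (h ▸ hv)
    simp only [Set.mem_Iio, pathGraph_adj] at huy huv ⊢
    omega
  exact (hlt hz).not_ge hyz

lemma eq_pathWindow_of_ordConnected {m : ℕ} {s : Finset (Fin m)} (hne : s.Nonempty)
    (hs : (s : Set (Fin m)).OrdConnected) : ∃ a, a + s.card ≤ m ∧ s = pathWindow m s.card a := by
  obtain ⟨x, z, hxz⟩ : ∃ x z, s = Finset.Icc x z :=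
    ⟨s.min' hne, s.max' hne, Finset.Subset.antisymm
      (fun y hy => Finset.mem_Icc.2 ⟨s.min'_le y hy, s.le_max' y hy⟩)
      (fun y hy => hs.out (s.min'_mem hne) (s.max'_mem hne) (by simpa using hy))⟩
  have hxz' : x ≤ z := Finset.nonempty_Icc.1 (hxz ▸ hne)
  have hcard : s.card = z + 1 - x := by rw [hxz, Fin.card_Icc]
  refine ⟨x, by omega, ?_⟩
  ext y
  rw [hcard, mem_pathWindow, hxz, Finset.mem_Icc]
  omega

lemma copies_pathGraph_pathGraph {k : ℕ} (hk : 0 < k) (m : ℕ) :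
    copies (pathGraph m) (pathGraph k) = m + 1 - k := by
  have hcopies : {s : Finset (Fin m) |
      Nonempty ((pathGraph m).induce (s : Set (Fin m)) ≃g pathGraph k)} =
        pathWindow m k '' Set.Iio (m + 1 - k) := by
    ext s
    constructor
    · rintro ⟨e⟩
      obtain rfl : s.card = k := by simpa using card_eq_of_induce_iso e
      obtain ⟨a, ha, hsa⟩ := eq_pathWindow_of_ordConnected (Finset.card_pos.1 hk)
        (ordConnected_of_preconnected_induce_pathGraph
          (e.preconnected_iff.2 (pathGraph_preconnected _)))
      exact ⟨a, by simp only [Set.mem_Iio]; omega, hsa.symm⟩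
    · rintro ⟨a, ha, rfl⟩
      exact nonempty_induce_pathWindow_iso (by simp only [Set.mem_Iio] at ha; omega)
  rw [copies, hcopies, (pathWindow_injOn hk).ncard_image, Set.ncard_Iio_nat]

end PathCounts

section CycleCounts

lemma cycleGraph_adj_iff {m : ℕ} (hm : 2 ≤ m) {x y : Fin m} : (cycleGraph m).Adj x y ↔
    (x : ℕ) + 1 = y ∨ (y : ℕ) + 1 = x ∨ ((x : ℕ) = 0 ∧ (y : ℕ) + 1 = m) ∨
      ((y : ℕ) = 0 ∧ (x : ℕ) + 1 = m) := by
  rw [cycleGraph_adj']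
  rcases lt_trichotomy x y with hxy | rfl | hxy
  · rw [Fin.coe_sub_iff_lt.2 hxy, Fin.coe_sub_iff_le.2 hxy.le]
    omega
  · rw [Fin.coe_sub_iff_le.2 le_rfl]
    omega
  · rw [Fin.coe_sub_iff_lt.2 hxy, Fin.coe_sub_iff_le.2 hxy.le]
    omega

/-- The arc of the `k` consecutive vertices `i, i + 1, …, i + k - 1` of the cycle on `m` vertices,
where `+` wraps around. -/
def cycleArc {m : ℕ} (k : ℕ) (i : Fin m) : Finset (Fin m) := {x | ((x - i : Fin m) : ℕ) < k}

lemma mem_cycleArc_iff {m k : ℕ} {i x : Fin m} :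
    x ∈ cycleArc k i ↔ (i ≤ x ∧ (x : ℕ) < i + k) ∨ (x < i ∧ x + m < i + k) := by
  rw [cycleArc, Finset.mem_filter_univ]
  rcases le_or_gt i x with h | h
  · rw [Fin.coe_sub_iff_le.2 h]
    omega
  · rw [Fin.coe_sub_iff_lt.2 h]
    omega

lemma cycleArc_ne_cycleArc_of_lt {m k : ℕ} (hk : 0 < k) (hkm : k < m) {i j : Fin m} (hij : i < j) :
    cycleArc k i ≠ cycleArc k j := by
  intro h
  let p : Fin m := ⟨j - 1, by omega⟩
  have hj : j ∈ cycleArc k i ↔ j ∈ cycleArc k j := by rw [h]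
  have hp : p ∈ cycleArc k i ↔ p ∈ cycleArc k j := by rw [h]
  simp only [mem_cycleArc_iff, p, Fin.le_def, Fin.lt_def] at hj hp
  omega

/-- The vertex `i + t` of the cycle on `m` vertices, for a vertex `t` of the path on `k ≤ m`
vertices. -/
def cycleRotate {m k : ℕ} (hkm : k ≤ m) (i : Fin m) (t : Fin k) : Fin m := i + t.castLE hkm

lemma val_cycleRotate {m k : ℕ} (hkm : k ≤ m) (i : Fin m) (t : Fin k) :
    (cycleRotate hkm i t : ℕ) = if m ≤ (i : ℕ) + t then (i : ℕ) + t - m else (i : ℕ) + t :=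
  Fin.val_add_eq_ite _ _

lemma cycleRotate_injective {m k : ℕ} (hkm : k ≤ m) (i : Fin m) :
    Function.Injective (cycleRotate hkm i) := by
  intro s t hst
  rw [Fin.ext_iff, val_cycleRotate, val_cycleRotate] at hst
  split_ifs at hst <;> omega

lemma cycleGraph_adj_cycleRotate_iff {m k : ℕ} (hkm : k < m) (i : Fin m) {s t : Fin k} :
    (cycleGraph m).Adj (cycleRotate hkm.le i s) (cycleRotate hkm.le i t) ↔
      (pathGraph k).Adj s t := by
  have hm : 2 ≤ m := by have := s.pos; omega
  rw [cycleGraph_adj_iff hm, val_cycleRotate, val_cycleRotate, pathGraph_adj]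
  split_ifs <;> omega

lemma mem_cycleArc_iff_exists_cycleRotate {m k : ℕ} (hkm : k ≤ m) {i x : Fin m} :
    x ∈ cycleArc k i ↔ ∃ t, cycleRotate hkm i t = x := by
  simp only [mem_cycleArc_iff, Fin.ext_iff, val_cycleRotate, Fin.le_def, Fin.lt_def]
  constructor
  · rintro (⟨hix, hxk⟩ | ⟨hxi, hxk⟩)
    · exact ⟨⟨x - i, by omega⟩, by dsimp only; split_ifs <;> omega⟩
    · exact ⟨⟨x + m - i, by omega⟩, by dsimp only; split_ifs <;> omega⟩
  · rintro ⟨t, ht⟩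
    split_ifs at ht <;> omega

lemma nonempty_induce_cycleArc_iso {m k : ℕ} (hkm : k < m) (i : Fin m) :
    Nonempty ((cycleGraph m).induce (cycleArc k i : Set (Fin m)) ≃g pathGraph k) := by
  let f : pathGraph k ↪g cycleGraph m :=
    ⟨⟨cycleRotate hkm.le i, cycleRotate_injective hkm.le i⟩, cycleGraph_adj_cycleRotate_iff hkm i⟩
  have harc : cycleArc k i = Finset.univ.map f.toEmbedding := by
    ext x
    simp only [Finset.mem_map, Finset.mem_univ, true_and]
    exact mem_cycleArc_iff_exists_cycleRotate hkm.le
  exact harc ▸ nonempty_induce_map_univ_iso f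

lemma le_copies_cycleGraph_pathGraph {m k : ℕ} (hk : 0 < k) (hkm : k < m) :
    m ≤ copies (cycleGraph m) (pathGraph k) := by
  have harc : Function.Injective (cycleArc (m := m) k) := by
    intro i j hij
    by_contra hne
    rcases lt_or_gt_of_ne hne with h | h
    · exact cycleArc_ne_cycleArc_of_lt hk hkm h hij
    · exact cycleArc_ne_cycleArc_of_lt hk hkm h hij.symm
  calc m
    _ = (Set.range (cycleArc (m := m) k)).ncard := by
      rw [← Set.image_univ, Set.ncard_image_of_injective _ harc, Set.ncard_univ, Nat.card_fin]
    _ ≤ copies (cycleGraph m) (pathGraph k) :=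
      Set.ncard_le_ncard <| by
        rintro _ ⟨i, rfl⟩
        exact nonempty_induce_cycleArc_iso hkm i

end CycleCounts

section DegreeLeTwo

variable {V V' : Type*} {G : SimpleGraph V} {G' : SimpleGraph V'} {m : ℕ}

/-- `G` has maximum degree at most two: no vertex has three distinct neighbours. Mathlib's
`SimpleGraph.degree` is avoided because it is available only at vertices with finitely many
neighbours. -/
def DegreeLeTwo (G : SimpleGraph V) : Prop :=
  ∀ ⦃v a b c : V⦄, G.Adj v a → G.Adj v b → G.Adj v c → a = b ∨ a = c ∨ b = c

lemma DegreeLeTwo.of_isIndContained (hG' : DegreeLeTwo G') (h : G ⊴ G') : DegreeLeTwo G := by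
  obtain ⟨f⟩ := h
  intro v a b c ha hb hc
  simpa only [f.injective.eq_iff] using
    hG' (f.map_adj_iff.2 ha) (f.map_adj_iff.2 hb) (f.map_adj_iff.2 hc)

lemma degreeLeTwo_of_forall_induce
    (h : ∀ s : Finset V, s.card ≤ 4 → DegreeLeTwo (G.induce (s : Set V))) : DegreeLeTwo G := by
  classical
  intro v a b c ha hb hc
  have hs := h {v, a, b, c} Finset.card_le_four
  simpa using hs (v := ⟨v, by simp⟩) (a := ⟨a, by simp⟩) (b := ⟨b, by simp⟩) (c := ⟨c, by simp⟩)
    ha hb hc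

lemma degreeLeTwo_pathGraph (m : ℕ) : DegreeLeTwo (pathGraph m) := by
  intro v a b c ha hb hc
  simp only [pathGraph_adj] at ha hb hc
  omega

lemma SameDeck.degreeLeTwo [Fintype V] [Fintype V'] {k : ℕ} (h : SameDeck G G' k) (hk : 4 ≤ k)
    (hkV : k ≤ Fintype.card V) (hG' : DegreeLeTwo G') : DegreeLeTwo G :=
  degreeLeTwo_of_forall_induce fun _ hs =>
    hG'.of_isIndContained (h.induce_isIndContained hkV (hs.trans hk))

lemma isIndContained_of_comap_succ_eq {H : SimpleGraph (Fin (m + 1))} {K : SimpleGraph (Fin m)}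
    (hK : H.comap Fin.succ = K) (f : K ↪g G) {u : V} (hu : u ∉ Set.range f)
    (hadj : ∀ i, G.Adj u (f i) ↔ H.Adj 0 i.succ) : H ⊴ G := by
  subst hK
  refine ⟨⟨⟨Fin.cons u f, Fin.cons_injective_iff.2 ⟨hu, f.injective⟩⟩, ?_⟩⟩
  intro i j
  change G.Adj ((Fin.cons u f : Fin (m + 1) → V) i) ((Fin.cons u f : Fin (m + 1) → V) j) ↔ H.Adj i j
  induction i using Fin.cases with
  | zero =>
    induction j using Fin.cases with
    | zero => simp
    | succ j => exact hadj j
  | succ i =>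
    induction j using Fin.cases with
    | zero => simpa [adj_comm] using hadj i
    | succ j => exact f.map_adj_iff

lemma pathGraph_comap_succ (m : ℕ) : (pathGraph (m + 1)).comap Fin.succ = pathGraph m := by
  ext i j
  simp only [comap_adj, pathGraph_adj, Fin.val_succ]
  omega

lemma cycleGraph_comap_succ (m : ℕ) : (cycleGraph (m + 1)).comap Fin.succ = pathGraph m := by
  ext i j
  have hm : 2 ≤ m + 1 := by have := i.pos; omega
  simp only [comap_adj, cycleGraph_adj_iff hm, pathGraph_adj, Fin.val_succ]
  omega

variable (f : pathGraph m ↪g G) {u : V}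

lemma pathGraph_succ_isIndContained_of_adj_first (hu : u ∉ Set.range f)
    (hadj : ∀ i, G.Adj u (f i) ↔ (i : ℕ) = 0) : pathGraph (m + 1) ⊴ G := by
  refine isIndContained_of_comap_succ_eq (pathGraph_comap_succ m) f hu fun i => ?_
  rw [hadj, pathGraph_adj]
  simp [eq_comm]

lemma pathGraph_succ_isIndContained_of_adj_last (hu : u ∉ Set.range f)
    (hadj : ∀ i, G.Adj u (f i) ↔ (i : ℕ) + 1 = m) : pathGraph (m + 1) ⊴ G := by
  let rev : pathGraph m ↪g pathGraph m := ⟨Fin.revPerm.toEmbedding, by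
    intro i j
    simp only [pathGraph_adj, Equiv.coe_toEmbedding, Fin.revPerm_apply, Fin.val_rev]
    omega⟩
  refine pathGraph_succ_isIndContained_of_adj_first (f.comp rev) (u := u) ?_ fun i => ?_
  · rintro ⟨i, rfl⟩
    exact hu ⟨rev i, rfl⟩
  · refine (hadj i.rev).trans ?_
    rw [Fin.val_rev]
    omega

lemma cycleGraph_succ_isIndContained_of_adj_ends (hu : u ∉ Set.range f)
    (hadj : ∀ i, G.Adj u (f i) ↔ (i : ℕ) = 0 ∨ (i : ℕ) + 1 = m) : cycleGraph (m + 1) ⊴ G := by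
  refine isIndContained_of_comap_succ_eq (cycleGraph_comap_succ m) f hu fun i => ?_
  have hm : 2 ≤ m + 1 := by have := i.pos; omega
  rw [hadj, cycleGraph_adj_iff hm]
  simp [eq_comm]

lemma DegreeLeTwo.eq_end_of_adj (hG : DegreeLeTwo G) (hu : u ∉ Set.range f) {i : Fin m}
    (hadj : G.Adj u (f i)) : (i : ℕ) = 0 ∨ (i : ℕ) + 1 = m := by
  by_contra! hi
  let p : Fin m := ⟨i - 1, by omega⟩
  let q : Fin m := ⟨i + 1, by omega⟩
  have hp : G.Adj (f i) (f p) := f.map_adj_iff.2 (pathGraph_adj.2 (.inr (Nat.succ_pred hi.1)))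
  have hq : G.Adj (f i) (f q) := f.map_adj_iff.2 (pathGraph_adj.2 (.inl rfl))
  rcases hG hadj.symm hp hq with h | h | h
  · exact hu ⟨p, h.symm⟩
  · exact hu ⟨q, h.symm⟩
  · simpa [p, q] using f.injective h

lemma DegreeLeTwo.mem_range_of_adj (hG : DegreeLeTwo G) (hpath : ¬ pathGraph (m + 1) ⊴ G)
    (hcycle : ¬ cycleGraph (m + 1) ⊴ G) {i : Fin m} (hadj : G.Adj (f i) u) : u ∈ Set.range f := by
  by_contra hu
  have hends (j : Fin m) : G.Adj u (f j) → (j : ℕ) = 0 ∨ (j : ℕ) + 1 = m := hG.eq_end_of_adj f hu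
  let first : Fin m := ⟨0, i.pos⟩
  let last : Fin m := ⟨m - 1, Nat.sub_lt i.pos one_pos⟩
  have eq_first {j : Fin m} (hj : (j : ℕ) = 0) : j = first := Fin.ext hj
  have eq_last {j : Fin m} (hj : (j : ℕ) + 1 = m) : j = last := Fin.ext (by simp only [last]; omega)
  by_cases hfirst : G.Adj u (f first) <;> by_cases hlast : G.Adj u (f last)
  · refine hcycle <| cycleGraph_succ_isIndContained_of_adj_ends f hu fun j => ⟨hends j, ?_⟩
    rintro (hj | hj)
    · rwa [eq_first hj]
    · rwa [eq_last hj]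
  · refine hpath <| pathGraph_succ_isIndContained_of_adj_first f hu fun j =>
      ⟨fun hj => ?_, fun hj => ?_⟩
    · exact (hends j hj).resolve_right fun h => hlast (eq_last h ▸ hj)
    · rwa [eq_first hj]
  · refine hpath <| pathGraph_succ_isIndContained_of_adj_last f hu fun j =>
      ⟨fun hj => ?_, fun hj => ?_⟩
    · exact (hends j hj).resolve_left fun h => hfirst (eq_first h ▸ hj)
    · rwa [eq_last hj]
  · rcases hends i hadj.symm with hi | hi
    · exact hfirst (eq_first hi ▸ hadj.symm)
    · exact hlast (eq_last hi ▸ hadj.symm)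

end DegreeLeTwo

section PathReconstruction

variable {V : Type*} {G : SimpleGraph V} {k n : ℕ}

lemma exists_maximal_pathGraph_isIndContained [Finite V] (h : pathGraph k ⊴ G) :
    ∃ m, k ≤ m ∧ Maximal (fun m => pathGraph m ⊴ G) m := by
  have hfinite : {m | pathGraph m ⊴ G}.Finite :=
    (Set.finite_Iic (Nat.card V)).subset fun m ⟨f⟩ => by
      simpa using Finite.card_le_of_embedding f.toEmbedding
  exact hfinite.exists_le_maximal h

lemma not_cycleGraph_isIndContained [Fintype V] (hk : 0 < k) {m : ℕ} (hkm : k < m)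
    (hm : copies G (pathGraph k) < m) : ¬ cycleGraph m ⊴ G := by
  rintro ⟨f⟩
  exact ((le_copies_cycleGraph_pathGraph hk hkm).trans (copies_mono f)).not_gt hm

lemma SameDeck.nonempty_iso_pathGraph [Fintype V] (h : SameDeck G (pathGraph n) k) (hk : 4 ≤ k)
    (hkn : k ≤ n) (hn : n < 2 * k) : Nonempty (G ≃g pathGraph n) := by
  have hcard : Fintype.card V = n := by simpa using h.card_eq_card (by omega) (by simpa using hkn)
  have hcopies : copies G (pathGraph k) = n + 1 - k := by
    rw [sameDeck_iff_copies.1 h, copies_pathGraph_pathGraph (by omega)]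
  have hdeg : DegreeLeTwo G := h.degreeLeTwo hk (hcard ▸ hkn) (degreeLeTwo_pathGraph n)
  obtain ⟨m, hkm, ⟨f⟩, hmax⟩ :=
    exists_maximal_pathGraph_isIndContained (copies_pos_iff.1 (by rw [hcopies]; omega))
  have hclosed (i : Fin m) (u : V) : G.Adj (f i) u → u ∈ Set.range f :=
    hdeg.mem_range_of_adj f (fun hlong => (hmax hlong m.le_succ).not_gt m.lt_succ_self)
      (not_cycleGraph_isIndContained (k := k) (by omega) (by omega) (by omega))
  have hnm : n + 1 - k ≤ m + 1 - k := by
    rw [← hcopies, ← copies_pathGraph_pathGraph (by omega)]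
    exact copies_le_copies_of_range_closed (pathGraph_preconnected k) f hclosed (by simp; omega)
  have hmn : m ≤ n := by simpa [hcard] using Fintype.card_le_of_embedding f.toEmbedding
  obtain rfl : m = n := by omega
  have hf : Function.Surjective f :=
    ((Fintype.bijective_iff_injective_and_card f).2 ⟨f.injective, by simp [hcard]⟩).surjective
  exact ⟨(RelIso.ofSurjective f hf).symm⟩

end PathReconstruction

section PathSumCycle

variable {a b k : ℕ}

/-- The disjoint union of the path on `a` vertices and the cycle on `b` vertices, with the path
occupying the vertices `0, …, a - 1` and the cycle the vertices `a, …, a + b - 1` of `Fin (a + b)`,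
which makes it comparable with the path on `a + b` vertices. -/
def pathSumCycle (a b : ℕ) : SimpleGraph (Fin (a + b)) :=
  (pathGraph a ⊕g cycleGraph b).comap finSumFinEquiv.symm

lemma not_nonempty_pathSumCycle_iso (ha : 0 < a) (hb : 0 < b) (n : ℕ) :
    ¬ Nonempty (pathSumCycle a b ≃g pathGraph n) := by
  rintro ⟨e⟩
  have : Nonempty (Fin a) := ⟨0, ha⟩
  have : Nonempty (Fin b) := ⟨0, hb⟩
  let e' : pathSumCycle a b ≃g pathGraph a ⊕g cycleGraph b := Iso.comap finSumFinEquiv.symm _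
  exact not_preconnected_sum
    (e'.preconnected_iff.1 (e.preconnected_iff.2 (pathGraph_preconnected n)))

lemma pathSumCycle_adj (hb : 2 ≤ b) {x y : Fin (a + b)} : (pathSumCycle a b).Adj x y ↔
    ((x : ℕ) + 1 = y ∧ (y : ℕ) ≠ a) ∨ ((y : ℕ) + 1 = x ∧ (x : ℕ) ≠ a) ∨
      ((x : ℕ) = a ∧ (y : ℕ) + 1 = a + b) ∨ ((y : ℕ) = a ∧ (x : ℕ) + 1 = a + b) := by
  rw [pathSumCycle, comap_adj]
  induction x using Fin.addCases <;> induction y using Fin.addCases <;>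
    simp [pathGraph_adj, cycleGraph_adj_iff hb] <;> omega

/-- The position of a vertex on its tail, counted from the vertex `a`, which has level `0`: in the
path on `a + b` vertices, `a` is preceded by the tail `a - 1, a - 2, …, 0`, whereas in
`pathSumCycle a b` it is preceded by the tail `a + b - 1, a + b - 2, …, a + 1`. -/
def tailLevel (x : Fin (a + b)) : ℕ := if (x : ℕ) ≤ a then a - x else a + b - x

/-- The least level attained by no vertex of `s`. -/
noncomputable def missedLevel (s : Finset (Fin (a + b))) : ℕ := sInf {j | j ∉ s.image tailLevel}

lemma tailLevel_ne_missedLevel {s : Finset (Fin (a + b))} {x : Fin (a + b)} (hx : x ∈ s) :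
    tailLevel x ≠ missedLevel s := by
  have hmem : missedLevel s ∉ s.image tailLevel :=
    Nat.sInf_mem (s := {j | j ∉ s.image tailLevel}) (Infinite.exists_notMem_finset _)
  exact fun h => hmem (Finset.mem_image.2 ⟨x, hx, h⟩)

lemma missedLevel_le_card (s : Finset (Fin (a + b))) : missedLevel s ≤ s.card := by
  have hcard : (s.image tailLevel).card < (Finset.range (s.card + 1)).card := by
    simpa using Nat.lt_succ_of_le Finset.card_image_le
  obtain ⟨j, hj, hjs⟩ := Finset.exists_mem_notMem_of_card_lt_card hcard
  exact (Nat.sInf_le hjs).trans (Nat.lt_succ_iff.1 (Finset.mem_range.1 hj))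

/-- The permutation of the vertices exchanging the two tails below level `j`. -/
def tailSwap (hab : a ≤ b) (j : ℕ) : Equiv.Perm (Fin (a + b)) :=
  Function.Involutive.toPerm (fun x => ⟨if (x : ℕ) < a ∧ a < x + j then x + b
    else if b ≤ x ∧ a + b < x + j then x - b else x, by split_ifs <;> omega⟩) <| by
    intro x
    ext
    dsimp only
    split_ifs <;> omega

lemma val_tailSwap (hab : a ≤ b) (j : ℕ) (x : Fin (a + b)) : (tailSwap hab j x : ℕ) =
    if (x : ℕ) < a ∧ a < x + j then (x : ℕ) + b
    else if b ≤ x ∧ a + b < x + j then (x : ℕ) - b else x := rfl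

lemma tailSwap_involutive (hab : a ≤ b) (j : ℕ) : Function.Involutive (tailSwap hab j) :=
  (tailSwap hab j).symm_apply_apply

lemma tailLevel_tailSwap (hab : a < b) (j : ℕ) (x : Fin (a + b)) :
    tailLevel (tailSwap hab.le j x) = tailLevel x := by
  simp only [tailLevel, val_tailSwap]
  split_ifs <;> omega

lemma missedLevel_map_tailSwap (hab : a < b) (j : ℕ) (s : Finset (Fin (a + b))) :
    missedLevel (s.map (tailSwap hab.le j).toEmbedding) = missedLevel s := by
  have hlevel : tailLevel ∘ tailSwap hab.le j = tailLevel := funext (tailLevel_tailSwap hab j)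
  rw [missedLevel, Finset.map_eq_image, Finset.image_image, Equiv.coe_toEmbedding, hlevel,
    missedLevel]

lemma pathGraph_adj_tailSwap_iff (hab : a + 2 ≤ b) {j : ℕ} (hj : j ≤ a + 1) {x y : Fin (a + b)}
    (hx : tailLevel x ≠ j) (hy : tailLevel y ≠ j) :
    (pathGraph (a + b)).Adj (tailSwap (by omega) j x) (tailSwap (by omega) j y) ↔
      (pathSumCycle a b).Adj x y := by
  rw [pathGraph_adj, pathSumCycle_adj (by omega), val_tailSwap, val_tailSwap]
  rw [tailLevel] at hx hy
  split_ifs at hx hy ⊢ <;> omega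

/-- The image of a vertex set `s` when the two tails are exchanged below the least level that `s`
misses. The exchange leaves this level unchanged, so performing it twice recovers `s`. -/
noncomputable def swapTails (hab : a ≤ b) (s : Finset (Fin (a + b))) : Finset (Fin (a + b)) :=
  s.map (tailSwap hab (missedLevel s)).toEmbedding

lemma card_swapTails (hab : a ≤ b) (s : Finset (Fin (a + b))) : (swapTails hab s).card = s.card :=
  Finset.card_map _

lemma swapTails_involutive (hab : a < b) : Function.Involutive (swapTails hab.le) := by
  intro s
  rw [swapTails, swapTails, missedLevel_map_tailSwap hab, Finset.map_eq_image, Finset.map_eq_image,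
    Finset.image_image]
  simp only [Equiv.coe_toEmbedding, (tailSwap_involutive _ _).comp_self, Finset.image_id]

lemma nonempty_induce_pathSumCycle_iso (hab : a + 2 ≤ b) {s : Finset (Fin (a + b))}
    (hs : s.card ≤ a + 1) :
    Nonempty ((pathSumCycle a b).induce (s : Set (Fin (a + b))) ≃g
      (pathGraph (a + b)).induce (swapTails (by omega) s : Set (Fin (a + b)))) := by
  let σ : Equiv.Perm (Fin (a + b)) := tailSwap (by omega) (missedLevel s)
  let f : (pathSumCycle a b).induce (s : Set (Fin (a + b))) ↪g pathGraph (a + b) :=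
    { toFun := fun x => σ x
      inj' := σ.injective.comp Subtype.val_injective
      map_rel_iff' := fun {x y} => pathGraph_adj_tailSwap_iff hab
        ((missedLevel_le_card s).trans hs) (tailLevel_ne_missedLevel x.2)
        (tailLevel_ne_missedLevel y.2) }
  have hrange : Set.range f = (swapTails (by omega) s : Finset (Fin (a + b))) := by
    rw [swapTails, Finset.coe_map]
    exact (Set.range_comp σ Subtype.val).trans (congrArg _ Subtype.range_coe)
  exact hrange ▸ ⟨f.isoInduceRange⟩

lemma sameDeck_pathSumCycle (hab : a + 2 ≤ b) (hk : k ≤ a + 1) :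
    SameDeck (pathSumCycle a b) (pathGraph (a + b)) k :=
  sameDeck_iff_exists_equiv.2
    ⟨(swapTails_involutive (by omega)).toPerm.subtypeEquiv fun s => by
      rw [Function.Involutive.coe_toPerm, card_swapTails],
      fun s => nonempty_induce_pathSumCycle_iso hab (s.2.trans_le hk)⟩

end PathSumCycle

/-- For `n ≥ 6`: (a) every graph with the same `(⌊n/2⌋+1)`-deck as `P_n` is
isomorphic to `P_n`; (b) some graph not isomorphic to `P_n` has the same `⌊n/2⌋`-deck as
`P_n`; hence `ρ(P_n) = ⌊n/2⌋ + 1`. -/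
theorem stmt_6 (n : ℕ) (hn : 6 ≤ n) :
    (∀ (W : Type) [Fintype W] (H : SimpleGraph W),
      SameDeck H (pathGraph n) (n / 2 + 1) → Nonempty (H ≃g pathGraph n)) ∧
    (∃ (W : Type) (_ : Fintype W) (H : SimpleGraph W),
      ¬ Nonempty (H ≃g pathGraph n) ∧ SameDeck H (pathGraph n) (n / 2)) ∧
    IsLeast {k : ℕ | ∀ (W : Type) [Fintype W] (H : SimpleGraph W),
      SameDeck H (pathGraph n) k → Nonempty (H ≃g pathGraph n)} (n / 2 + 1) := by
  have hreconstruct : ∀ (W : Type) [Fintype W] (H : SimpleGraph W),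
      SameDeck H (pathGraph n) (n / 2 + 1) → Nonempty (H ≃g pathGraph n) :=
    fun W _ H h => h.nonempty_iso_pathGraph (by omega) (by omega) (by omega)
  obtain ⟨a, b, rfl, ha, hab, hk⟩ : ∃ a b, n = a + b ∧ 0 < a ∧ a + 2 ≤ b ∧ n / 2 = a + 1 :=
    ⟨n / 2 - 1, n - (n / 2 - 1), by omega⟩
  have hniso : ¬ Nonempty (pathSumCycle a b ≃g pathGraph (a + b)) :=
    not_nonempty_pathSumCycle_iso ha (by omega) _
  refine ⟨hreconstruct, ⟨_, _, pathSumCycle a b, hniso, sameDeck_pathSumCycle hab hk.le⟩,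
    hreconstruct, fun k hk' => ?_⟩
  by_contra! hlt
  exact hniso (hk' _ _ (sameDeck_pathSumCycle hab (by omega)))
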